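/- Let G be the free group on generators a_1,…,a_n (n ≥ 1) and let H be a free group of rank greater than 1. Then the set of surjective homomorphisms φ : G → H, identified with n-tuples (φ(a_1),…,φ(a_n)) ∈ H^n, has asymptotic density 0 in H^n. -/

import Mathlib

/-- The number of elements of the free group of rank `n` of word length at most `p`,
i.e. `|H_p|`. -/
noncomputable def ballCount (n p : ℕ) : ℕ :=
  Nat.card {w : FreeGroup (Fin n) // FreeGroup.norm w ≤ p}

/-!
A tuple `f` in `H ^ m` is small-cancellation at scale `L` if its entries have length at least `2L`
and the `2m` words `f i`, `(f i)⁻¹` have pairwise distinct prefixes of length `L`. When the image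
of a nontrivial reduced word is then multiplied out from the right, every partial product starts
with the first `L` letters of its leftmost factor. So all these images have length at least `L`,
and for `L ≥ 2` no generator of `H` is among them.

If small cancellation fails inside the ball of radius `p ≥ 3L`, some entry has length less than
`2L`, or one of the words `f i`, `(f i)⁻¹` is determined by the other entries together with what
remains of it after its first `L` letters. Either way one entry is encoded by an element of the
ball of radius `p - L`, which is at least `2 ^ L` times smaller than the ball of radius `p`. With
`L = p / 3` the proportion of such tuples is `O(2 ^ (-p / 3))`.
-/

open Filter Topology
open FreeGroup hiding norm map_one map_mul map_inv

section ReducedWords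

variable {α : Type*}

theorem exists_cancellation (u : List (α × Bool)) : ∀ v, IsReduced u → IsReduced v →
    ∃ a c b, u = a ++ c ∧ v = invRev c ++ b ∧ IsReduced (a ++ b) := by
  induction u using List.reverseRecOn with
  | nil => exact fun v _ hv => ⟨[], [], v, rfl, rfl, hv⟩
  | append_singleton u x ih =>
    rintro (_ | ⟨y, v⟩) hu hv
    · exact ⟨u ++ [x], [], [], by simp, rfl, by simpa using hu⟩
    by_cases hxy : x.1 = y.1 → x.2 = y.2
    · refine ⟨u ++ [x], [], y :: v, by simp, rfl, ?_⟩
      simpa using hu.append_overlap (isReduced_cons_cons.mpr ⟨hxy, hv⟩) (List.cons_ne_nil x [])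
    · obtain ⟨a, c, b, rfl, rfl, hab⟩ := ih v (hu.infix (List.prefix_append _ _).isInfix)
        (hv.infix (List.suffix_cons _ _).isInfix)
      have hy : y = (x.1, !x.2) := by
        push Not at hxy
        exact Prod.ext hxy.1.symm (Bool.eq_not.mpr hxy.2.symm)
      exact ⟨a, c ++ [x], b, by simp, by simp [hy, invRev], hab⟩

theorem exists_isReduced_cons [Nontrivial α] {u : List (α × Bool)} (hu : IsReduced u) :
    ∃ a : α, ∀ b : Bool, IsReduced ((a, b) :: u) := by
  cases u with
  | nil => exact ⟨Classical.arbitrary α, fun _ => .singleton⟩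
  | cons x u =>
    obtain ⟨a, ha⟩ := exists_ne x.1
    exact ⟨a, fun _ => isReduced_cons_cons.mpr ⟨fun h => absurd h ha, hu⟩⟩

variable [DecidableEq α]

theorem exists_toWord_mul (x y : FreeGroup α) :
    ∃ a c b, x.toWord = a ++ c ∧ y.toWord = invRev c ++ b ∧ (x * y).toWord = a ++ b := by
  obtain ⟨a, c, b, hx, hy, hab⟩ :=
    exists_cancellation x.toWord y.toWord isReduced_toWord isReduced_toWord
  have hxy : x * y = mk (a ++ b) := by
    rw [← mk_toWord (x := x), ← mk_toWord (x := y), hx, hy]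
    simp only [← mul_mk, ← inv_mk, mul_assoc, mul_inv_cancel_left]
  exact ⟨a, c, b, hx, hy, by rw [hxy, toWord_mk, hab.reduce_eq]⟩

theorem take_toWord_mul_and_le_norm {x y : FreeGroup α} {L : ℕ} (hx : 2 * L ≤ x.norm)
    (hxy : x⁻¹.toWord.take L ≠ y.toWord.take L) :
    (x * y).toWord.take L = x.toWord.take L ∧ L ≤ (x * y).norm := by
  obtain ⟨a, c, b, hac, hcb, hab⟩ := exists_toWord_mul x y
  have hc : c.length < L := by
    contrapose! hxy
    rw [toWord_inv, hac, hcb, invRev_append, List.take_append_of_le_length (by simpa using hxy),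
      List.take_append_of_le_length (by simpa using hxy)]
  have ha : L ≤ a.length := by
    have hlen : x.norm = a.length + c.length := by rw [FreeGroup.norm, hac, List.length_append]
    omega
  constructor
  · rw [hab, hac, List.take_append_of_le_length ha, List.take_append_of_le_length ha]
  · rw [FreeGroup.norm, hab, List.length_append]
    exact ha.trans (Nat.le_add_right _ _)

/-- The element spelled by the reduced word of `x` after its first `L` letters. -/
def dropPrefix (L : ℕ) (x : FreeGroup α) : FreeGroup α :=
  mk (x.toWord.drop L)

theorem toWord_dropPrefix (L : ℕ) (x : FreeGroup α) :
    (dropPrefix L x).toWord = x.toWord.drop L := by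
  have hred : IsReduced (x.toWord.drop L) := isReduced_toWord.infix (List.drop_suffix L _).isInfix
  rw [dropPrefix, toWord_mk, hred.reduce_eq]

theorem norm_dropPrefix (L : ℕ) (x : FreeGroup α) : (dropPrefix L x).norm = x.norm - L := by
  rw [FreeGroup.norm, toWord_dropPrefix, List.length_drop, FreeGroup.norm]

theorem eq_of_take_eq_of_dropPrefix_eq {L : ℕ} {x y : FreeGroup α}
    (htake : x.toWord.take L = y.toWord.take L) (hdrop : dropPrefix L x = dropPrefix L y) :
    x = y := by
  have hdrop' := congrArg toWord hdrop
  rw [toWord_dropPrefix, toWord_dropPrefix] at hdrop'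
  rw [← toWord_inj, ← List.take_append_drop L x.toWord, htake, hdrop', List.take_append_drop]

theorem take_toWord_inv {L : ℕ} {x : FreeGroup α} (hx : 2 * L ≤ x.norm) :
    x⁻¹.toWord.take L = (dropPrefix L x)⁻¹.toWord.take L := by
  have hlen : L ≤ (invRev (x.toWord.drop L)).length := by
    rw [invRev_length, List.length_drop]
    exact Nat.le_sub_of_add_le (by rwa [← two_mul])
  rw [toWord_inv, toWord_inv, toWord_dropPrefix, ← List.take_append_of_le_length hlen,
    ← invRev_append, List.take_append_drop]

end ReducedWords

section SmallCancellation

variable {ι α : Type*}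

/-- The image under `lift f` of the letter `x`, that is `f x.1` or `(f x.1)⁻¹` according to the
sign `x.2`. -/
def letterImage (f : ι → FreeGroup α) (x : ι × Bool) : FreeGroup α :=
  lift f (mk [x])

theorem lift_mk_cons (f : ι → FreeGroup α) (x : ι × Bool) (u : List (ι × Bool)) :
    lift f (mk (x :: u)) = letterImage f x * lift f (mk u) := by
  rw [letterImage, ← map_mul, mul_mk, List.singleton_append]

theorem letterImage_not (f : ι → FreeGroup α) (x : ι × Bool) :
    letterImage f (x.1, !x.2) = (letterImage f x)⁻¹ := by
  rw [letterImage, letterImage, ← map_inv, inv_mk]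
  rfl

theorem letterImage_inj {f g : ι → FreeGroup α} {x : ι × Bool} :
    letterImage f x = letterImage g x ↔ f x.1 = g x.1 := by
  obtain ⟨i, _ | _⟩ := x <;> simp [letterImage]

variable [DecidableEq α]

theorem norm_letterImage (f : ι → FreeGroup α) (x : ι × Bool) :
    (letterImage f x).norm = (f x.1).norm := by
  obtain ⟨i, _ | _⟩ := x <;> simp [letterImage]

/-- The small cancellation condition at scale `L` on a tuple of elements of a free group: the
entries have length at least `2 * L`, and the entries and their inverses are told apart by their
first `L` letters. -/
structure SmallCancellation (L : ℕ) (f : ι → FreeGroup α) : Prop where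
  two_mul_le_norm : ∀ i, 2 * L ≤ (f i).norm
  take_injective : Function.Injective fun x => (letterImage f x).toWord.take L

theorem SmallCancellation.take_toWord_lift_and_le_norm {L : ℕ} {f : ι → FreeGroup α}
    (hf : SmallCancellation L f) (u : List (ι × Bool)) : ∀ x, IsReduced (x :: u) →
      (lift f (FreeGroup.mk (x :: u))).toWord.take L = (letterImage f x).toWord.take L ∧
        L ≤ (lift f (FreeGroup.mk (x :: u))).norm := by
  have hnorm (x : ι × Bool) : 2 * L ≤ (letterImage f x).norm :=
    (hf.two_mul_le_norm x.1).trans_eq (norm_letterImage f x).symm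
  induction u with
  | nil => exact fun x _ => ⟨rfl, (Nat.le_mul_of_pos_left L two_pos).trans (hnorm x)⟩
  | cons y u ih =>
    intro x hxy
    obtain ⟨hsign, hy⟩ := isReduced_cons_cons.mp hxy
    rw [lift_mk_cons]
    apply take_toWord_mul_and_le_norm (hnorm x)
    rw [(ih y hy).1, ← letterImage_not]
    refine hf.take_injective.ne ?_
    rintro rfl
    exact Bool.not_ne_self _ (hsign rfl).symm

theorem SmallCancellation.le_norm_lift {L : ℕ} {f : ι → FreeGroup α}
    (hf : SmallCancellation L f) {w : FreeGroup ι} (hw : w ≠ 1) : L ≤ (lift f w).norm := by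
  classical
  rw [← mk_toWord (x := w)]
  cases hu : w.toWord with
  | nil => exact absurd (toWord_eq_nil_iff.mp hu) hw
  | cons x u => exact (hf.take_toWord_lift_and_le_norm u x (hu ▸ isReduced_toWord)).2

/-- The ways in which a tuple can violate `SmallCancellation L`: an entry is short, or two letters
have images with the same first `L` letters, the first of these images being long. -/
def cancellationDefect (L : ℕ) : ι ⊕ (ι × Bool) × (ι × Bool) → Set (ι → FreeGroup α)
  | .inl i => {f | (f i).norm < 2 * L}
  | .inr (x, y) => {f | x ≠ y ∧ 2 * L ≤ (f x.1).norm ∧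
      (letterImage f x).toWord.take L = (letterImage f y).toWord.take L}

theorem exists_mem_cancellationDefect {L : ℕ} {f : ι → FreeGroup α}
    (hf : ¬ SmallCancellation L f) : ∃ k, f ∈ cancellationDefect L k := by
  contrapose! hf
  have hlong (i : ι) : 2 * L ≤ (f i).norm := not_lt.mp (hf (.inl i))
  exact ⟨hlong, fun x y hxy => by_contra fun hne => hf (.inr (x, y)) ⟨hne, hlong x.1, hxy⟩⟩

theorem eq_of_mem_cancellationDefect_inr {L : ℕ} {x y : ι × Bool} {f g : ι → FreeGroup α}
    (hf : f ∈ cancellationDefect L (.inr (x, y))) (hg : g ∈ cancellationDefect L (.inr (x, y)))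
    (hdrop : dropPrefix L (letterImage f x) = dropPrefix L (letterImage g x))
    (hfg : ∀ j ≠ x.1, f j = g j) : f x.1 = g x.1 := by
  obtain ⟨hxy, hf_long, hf_take⟩ := hf
  obtain ⟨-, hg_long, hg_take⟩ := hg
  rw [← letterImage_inj]
  refine eq_of_take_eq_of_dropPrefix_eq ?_ hdrop
  -- If `y` is the inverse letter of `x`, the first `L` letters of the image of `x` are inverse to
  -- its last `L` letters, which `dropPrefix` retains.
  by_cases hgen : y.1 = x.1
  · have hy : y = (x.1, !x.2) :=
      Prod.ext hgen (Bool.eq_not.mpr fun hsign => hxy (Prod.ext hgen hsign).symm)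
    rw [← norm_letterImage] at hf_long hg_long
    rw [hf_take, hg_take, hy, letterImage_not, letterImage_not, take_toWord_inv hf_long,
      take_toWord_inv hg_long, hdrop]
  · rw [hf_take, hg_take, letterImage_inj.mpr (hfg y.1 hgen)]

theorem exists_norm_lift_le_one_of_surjective [Nonempty α] {f : ι → FreeGroup α}
    (hf : Function.Surjective (lift f)) : ∃ w ≠ 1, (lift f w).norm ≤ 1 := by
  obtain ⟨a⟩ := ‹Nonempty α›
  obtain ⟨w, hw⟩ := hf (of a)
  refine ⟨w, ?_, by rw [hw, norm_of]⟩
  rintro rfl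
  exact one_ne_of a (by rw [← hw, map_one])

end SmallCancellation

section Counting

theorem ncard_mul_ncard_le_of_determined {ι X Y : Type*} [Fintype ι] {E : Set (ι → X)} {A : Set X}
    {B : Set Y} (hA : A.Finite) (hB : B.Finite) (hE : ∀ f ∈ E, ∀ i, f i ∈ A) (i : ι)
    (t : (ι → X) → Y) (ht : ∀ f ∈ E, t f ∈ B)
    (hdet : ∀ f ∈ E, ∀ g ∈ E, t f = t g → (∀ j ≠ i, f j = g j) → f i = g i) :
    E.ncard * A.ncard ≤ B.ncard * A.ncard ^ Fintype.card ι := by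
  classical
  have hcube : (Set.univ.pi fun _ : ι => A).ncard = A.ncard ^ Fintype.card ι := by
    rw [Set.ncard, Set.encard_pi_eq_prod_encard, Finset.prod_const, Finset.card_univ]
    exact map_pow ENat.toNatHom _ _
  -- Recording a free element of `A` in the coordinate `i`, which `t` makes redundant, avoids the
  -- truncated exponent `Fintype.card ι - 1`.
  rw [← hcube, ← Set.ncard_prod, ← Set.ncard_prod]
  refine Set.ncard_le_ncard_of_injOn (fun q => (t q.1, Function.update q.1 i q.2)) ?_ ?_
    (hB.prod (Set.Finite.pi fun _ => hA))
  · rintro ⟨f, a⟩ ⟨hf, ha⟩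
    refine ⟨ht f hf, fun j _ => ?_⟩
    by_cases hj : j = i
    · subst hj; simpa using ha
    · simpa [hj] using hE f hf j
  · rintro ⟨f, a⟩ ⟨hf, -⟩ ⟨g, b⟩ ⟨hg, -⟩ h
    obtain ⟨htfg, hupdate⟩ := Prod.ext_iff.mp h
    have hab : a = b := by simpa using congrFun hupdate i
    have hne : ∀ j ≠ i, f j = g j := fun j hj => by simpa [hj] using congrFun hupdate j
    have hfg : f = g := funext fun j =>
      (eq_or_ne j i).elim (fun hj => hj ▸ hdet f hf g hg htfg hne) (hne j)
    rw [hfg, hab]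

variable {ι α : Type*} [DecidableEq α]

variable (α) in
/-- The ball `H_p` of radius `p` in the word metric of `H = FreeGroup α`. -/
def normBall (p : ℕ) : Set (FreeGroup α) :=
  {w | w.norm ≤ p}

theorem mem_normBall {p : ℕ} {w : FreeGroup α} : w ∈ normBall α p ↔ w.norm ≤ p :=
  Iff.rfl

theorem finite_normBall [Finite α] (p : ℕ) : (normBall α p).Finite :=
  .of_injOn (f := toWord) (fun _ hw => hw) toWord_injective.injOn
    (List.finite_length_le (α × Bool) p)

theorem ncard_normBall_pos [Finite α] (p : ℕ) : 0 < (normBall α p).ncard :=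
  (Set.ncard_pos (finite_normBall p)).mpr ⟨1, by simp [normBall]⟩

theorem two_mul_ncard_normBall_le [Finite α] [Nontrivial α] (p : ℕ) :
    2 * (normBall α p).ncard ≤ (normBall α (p + 1)).ncard := by
  choose a ha using fun w : FreeGroup α => exists_isReduced_cons (isReduced_toWord (x := w))
  let extend (q : Bool × FreeGroup α) : FreeGroup α := mk ((a q.2, q.1) :: q.2.toWord)
  have toWord_extend (q) : (extend q).toWord = (a q.2, q.1) :: q.2.toWord := by
    rw [toWord_mk, (ha q.2 q.1).reduce_eq]
  have extend_injective : Function.Injective extend := by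
    rintro ⟨b, w⟩ ⟨b', w'⟩ h
    have hword := congrArg toWord h
    rw [toWord_extend, toWord_extend, List.cons.injEq, toWord_inj, Prod.mk.injEq] at hword
    exact Prod.ext hword.1.2 hword.2
  have hcard : ((Set.univ : Set Bool) ×ˢ normBall α p).ncard = 2 * (normBall α p).ncard := by
    simp
  rw [← hcard]
  refine Set.ncard_le_ncard_of_injOn extend ?_ extend_injective.injOn (finite_normBall _)
  rintro q ⟨-, hq⟩
  rw [mem_normBall, FreeGroup.norm, toWord_extend]
  exact Nat.succ_le_succ hq

theorem two_pow_mul_ncard_normBall_le [Finite α] [Nontrivial α] (p L : ℕ) :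
    2 ^ L * (normBall α p).ncard ≤ (normBall α (p + L)).ncard := by
  induction L with
  | zero => simp
  | succ L ih =>
    calc 2 ^ (L + 1) * (normBall α p).ncard = 2 * (2 ^ L * (normBall α p).ncard) := by ring
      _ ≤ 2 * (normBall α (p + L)).ncard := Nat.mul_le_mul_left 2 ih
      _ ≤ (normBall α (p + (L + 1))).ncard := two_mul_ncard_normBall_le (p + L)

variable [Finite α]

theorem finite_tuples_normBall [Finite ι] (S : Set (ι → FreeGroup α)) (p : ℕ) :
    {f ∈ S | ∀ i, f i ∈ normBall α p}.Finite :=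
  (Set.Finite.pi' fun _ => finite_normBall p).subset fun _ hf => hf.2

variable [Fintype ι] [Nontrivial α]

theorem two_pow_mul_ncard_le_of_determined {p L : ℕ} {E : Set (ι → FreeGroup α)}
    (hE : ∀ f ∈ E, ∀ i, f i ∈ normBall α (p + L)) (i : ι)
    (t : (ι → FreeGroup α) → FreeGroup α) (ht : ∀ f ∈ E, t f ∈ normBall α p)
    (hdet : ∀ f ∈ E, ∀ g ∈ E, t f = t g → (∀ j ≠ i, f j = g j) → f i = g i) :
    2 ^ L * E.ncard ≤ (normBall α (p + L)).ncard ^ Fintype.card ι := by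
  refine Nat.le_of_mul_le_mul_right ?_ (ncard_normBall_pos (α := α) (p + L))
  set N := (normBall α (p + L)).ncard
  calc 2 ^ L * E.ncard * N = 2 ^ L * (E.ncard * N) := mul_assoc _ _ _
    _ ≤ 2 ^ L * ((normBall α p).ncard * N ^ Fintype.card ι) := Nat.mul_le_mul_left _ <|
      ncard_mul_ncard_le_of_determined (finite_normBall _) (finite_normBall _) hE i t ht hdet
    _ = 2 ^ L * (normBall α p).ncard * N ^ Fintype.card ι := (mul_assoc _ _ _).symm
    _ ≤ N * N ^ Fintype.card ι := Nat.mul_le_mul_right _ (two_pow_mul_ncard_normBall_le p L)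
    _ = N ^ Fintype.card ι * N := mul_comm _ _

theorem two_pow_mul_ncard_cancellationDefect_le {p L : ℕ} (hp : 2 * L ≤ p)
    (k : ι ⊕ (ι × Bool) × (ι × Bool)) :
    2 ^ L * {f ∈ cancellationDefect L k | ∀ i, f i ∈ normBall α (p + L)}.ncard ≤
      (normBall α (p + L)).ncard ^ Fintype.card ι := by
  rcases k with i | ⟨x, y⟩
  · exact two_pow_mul_ncard_le_of_determined (fun f hf => hf.2) i (fun f => f i)
      (fun f hf => (le_of_lt hf.1).trans hp) (fun f _ g _ hfg _ => hfg)
  · refine two_pow_mul_ncard_le_of_determined (fun f hf => hf.2) x.1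
      (fun f => dropPrefix L (letterImage f x)) (fun f hf => ?_)
      (fun f hf g hg => eq_of_mem_cancellationDefect_inr hf.1 hg.1)
    rw [mem_normBall, norm_dropPrefix, norm_letterImage]
    exact Nat.sub_le_of_le_add (hf.2 x.1)

theorem two_pow_mul_ncard_not_smallCancellation_le {p L : ℕ} (hp : 3 * L ≤ p) :
    2 ^ L * {f : ι → FreeGroup α | ¬ SmallCancellation L f ∧ ∀ i, f i ∈ normBall α p}.ncard ≤
      Fintype.card (ι ⊕ (ι × Bool) × (ι × Bool)) * (normBall α p).ncard ^ Fintype.card ι := by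
  obtain ⟨q, rfl⟩ : ∃ q, p = q + L := ⟨p - L, by omega⟩
  let D (k) := {f : ι → FreeGroup α | f ∈ cancellationDefect L k ∧ ∀ i, f i ∈ normBall α (q + L)}
  have hsub : {f : ι → FreeGroup α | ¬ SmallCancellation L f ∧ ∀ i, f i ∈ normBall α (q + L)} ⊆
      ⋃ k, D k := fun f hf =>
    let ⟨k, hk⟩ := exists_mem_cancellationDefect hf.1
    Set.mem_iUnion.mpr ⟨k, hk, hf.2⟩
  have hfin : (⋃ k, D k).Finite := Set.finite_iUnion fun k => finite_tuples_normBall _ _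
  calc _ ≤ 2 ^ L * ∑ k, (D k).ncard := Nat.mul_le_mul_left _ <|
        (Set.ncard_le_ncard hsub hfin).trans (Set.ncard_iUnion_le_of_fintype D)
    _ = ∑ k, 2 ^ L * (D k).ncard := Finset.mul_sum _ _ _
    _ ≤ ∑ _k, (normBall α (q + L)).ncard ^ Fintype.card ι := Finset.sum_le_sum fun k _ =>
        two_pow_mul_ncard_cancellationDefect_le (by omega) k
    _ = _ := by rw [Finset.sum_const, Finset.card_univ, smul_eq_mul]

end Counting

section Density

variable {ι α : Type*} [Fintype ι] [DecidableEq α]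

/-- The asymptotic density `D(S) = d` of a set `S` of tuples of elements of `FreeGroup α`, measured
along the balls of the word metric. -/
def HasAsymptoticDensity (S : Set (ι → FreeGroup α)) (d : ℝ) : Prop :=
  Tendsto (fun p : ℕ => ({f ∈ S | ∀ i, f i ∈ normBall α p}.ncard : ℝ) /
    ((normBall α p).ncard : ℝ) ^ Fintype.card ι) atTop (𝓝 d)

theorem hasAsymptoticDensity_fin_iff {m n : ℕ} {S : Set (Fin m → FreeGroup (Fin n))} {d : ℝ} :
    HasAsymptoticDensity S d ↔ Tendsto (fun p : ℕ =>
      (Nat.card {f : Fin m → FreeGroup (Fin n) // f ∈ S ∧ ∀ i, (f i).norm ≤ p} : ℝ) /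
        (ballCount n p : ℝ) ^ m) atTop (𝓝 d) := by
  simp only [HasAsymptoticDensity, Fintype.card_fin, ← Nat.card_coe_set_eq]
  rfl

theorem HasAsymptoticDensity.mono_zero [Finite α] {S T : Set (ι → FreeGroup α)}
    (hT : HasAsymptoticDensity T 0) (hST : S ⊆ T) : HasAsymptoticDensity S 0 := by
  refine squeeze_zero (fun p => by positivity) (fun p => ?_) hT
  gcongr
  exact finite_tuples_normBall T p

variable [Finite α] [Nontrivial α]

theorem ncard_not_smallCancellation_div_le {p L : ℕ} (hp : 3 * L ≤ p) :
    ({f : ι → FreeGroup α | ¬ SmallCancellation L f ∧ ∀ i, f i ∈ normBall α p}.ncard : ℝ) /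
        ((normBall α p).ncard : ℝ) ^ Fintype.card ι ≤
      Fintype.card (ι ⊕ (ι × Bool) × (ι × Bool)) * (1 / 2) ^ L := by
  have hball : (0 : ℝ) < (normBall α p).ncard := mod_cast ncard_normBall_pos p
  rw [div_le_iff₀ (by positivity), one_div_pow, mul_one_div, div_mul_eq_mul_div,
    le_div_iff₀' (by positivity)]
  exact_mod_cast two_pow_mul_ncard_not_smallCancellation_le hp

/-- For `k = 0` this says that a generic tuple is a free basis of the subgroup it generates; a
surjective lift is excluded already at `k = 1`. -/
theorem density_zero_surjective_general (k : ℕ) :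
    HasAsymptoticDensity {f : ι → FreeGroup α | ∃ w ≠ 1, (lift f w).norm ≤ k} 0 := by
  let K : ℝ := Fintype.card (ι ⊕ (ι × Bool) × (ι × Bool))
  have hscale : Tendsto (fun p : ℕ => p / 3) atTop atTop :=
    Nat.tendsto_div_const_atTop three_ne_zero
  have hlim : Tendsto (fun p : ℕ => K * (1 / 2) ^ (p / 3)) atTop (𝓝 0) := by
    simpa using ((tendsto_pow_atTop_nhds_zero_of_lt_one (r := (1 / 2 : ℝ)) (by norm_num)
      (by norm_num)).comp hscale).const_mul K
  refine squeeze_zero' (.of_forall fun p => by positivity) ?_ hlim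
  filter_upwards [hscale.eventually_gt_atTop k] with p hkp
  refine le_trans ?_ (ncard_not_smallCancellation_div_le (ι := ι) (α := α) (Nat.mul_div_le p 3))
  gcongr with f
  · exact finite_tuples_normBall _ p
  · rintro ⟨w, hw, hle⟩ hf
    exact (hkp.trans_le (hf.le_norm_lift hw)).not_ge hle

end Density

/-- Let `G` be the free group on `m ≥ 1` generators and `H` the free
group of rank `n > 1`. The set of surjective homomorphisms `G → H`, identified with
`m`-tuples of elements of `H`, has asymptotic density `0` in `H^m`. -/
theorem density_zero_surjective {m n : ℕ} (hm : 1 ≤ m) (hn : 1 < n) :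
    Filter.Tendsto (fun p : ℕ =>
      (Nat.card {f : Fin m → FreeGroup (Fin n) //
          Function.Surjective (FreeGroup.lift f) ∧
          ∀ i, FreeGroup.norm (f i) ≤ p} : ℝ) / (ballCount n p : ℝ) ^ m)
      Filter.atTop (nhds 0) := by
  have : Nontrivial (Fin n) := Fin.nontrivial_iff_two_le.mpr hn
  exact hasAsymptoticDensity_fin_iff.mp <|
    (density_zero_surjective_general 1).mono_zero fun _ => exists_norm_lift_le_one_of_surjective
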